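/- For d = 3, the function p ↦ Σ_{l=0}^∞ √(3p)·η_l(p) = Σ_{l=0}^∞ √3 · c_l · p^{l+1/2} (1−p)^{2l+1} is maximized over p ∈ [1/3, 1] at p = 1/3, where its value equals 1. Equivalently, √(3p)(1 − η_∞(p)) ≤ 1 for all p ∈ [1/3,1] with equality at p = 1/3. -/

import Mathlib

/-!
The sum `E(p) = ∑ η_l(p)` equals `(1 - p) B(p (1 - p)²)`, where `B(x) = ∑ c_l x^l` is the generating
function of ternary trees, and `B = 1 + x B³`. Hence `E = 1 - p + p E³`: this is the extinction
probability of the branching process with three children with probability `p` and none otherwise.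

For the functional equation of `B` (`treeSeries_eq`), the formal identity
`∑ c_l X^l (1 - X)^(2l+1) = 1` is checked coefficientwise (`sum_c3_coeff`): each positive-degree
coefficient is a finite difference of too high an order of a polynomial in `l`. It says that
`B(u) = 1 / (1 - X)` for `u = X (1 - X)²`, and `u` is invertible under composition.

By the functional equation, the partial sums of `E` satisfy `S_(N+1) ≤ 1 - p + p S_N³`, so they stay
below every `s ≥ 0` with `1 - p + p s³ ≤ s` (`sum_eta3_le`). For `s = 1/√(3p)` this condition reads
`(1 - s)² (2s + 1) ≥ 0` after multiplication by `3s²`, and so `√(3p) E(p) ≤ 1`. At `p = 1/3` the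
value `E` solves `E³ - 3E + 2 = (E - 1)² (E + 2) = 0`, whence `E = 1` (`tsum_eta3_third`).
-/

noncomputable def c3 (l : ℕ) : ℝ := (Nat.choose (3 * l) l : ℝ) / (2 * l + 1)

noncomputable def eta3 (p : ℝ) (l : ℕ) : ℝ := c3 l * p ^ l * (1 - p) ^ (2 * l + 1)

open PowerSeries

lemma c3_nonneg (l : ℕ) : 0 ≤ c3 l := by unfold c3; positivity

lemma coeff_one_sub_X_pow (k m : ℕ) :
    coeff m ((1 - X : ℝ⟦X⟧) ^ k) = (-1) ^ m * (k.choose m : ℝ) := by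
  have h : (1 - X : ℝ⟦X⟧) ^ k
      = rescale (-1 : ℝ) (((1 + Polynomial.X : Polynomial ℝ) ^ k : Polynomial ℝ) : ℝ⟦X⟧) := by
    simp [sub_eq_add_neg]
  rw [h, coeff_rescale, Polynomial.coeff_coe, Polynomial.coeff_one_add_X_pow]

/-- Up to sign and a factor `(n + 1)!`, the coefficient of `c_l X^l (1 - X)^(2l+1)` in degree `n + 1`
is a binomial coefficient times a polynomial of degree `n` in `l`. If `3l < n`, both sides are
zero. -/
lemma factorial_mul_c3 (n l : ℕ) (hl : l ≤ n + 1) :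
    ((n + 1).factorial : ℝ) * (c3 l * ((2 * l + 1).choose (n + 1 - l) : ℝ))
      = ((n + 1).choose l : ℝ) * ((3 * l).descFactorial n : ℝ) := by
  rcases Nat.lt_or_ge (3 * l) n with h | h
  · rw [Nat.descFactorial_eq_zero_iff_lt.2 h, Nat.choose_eq_zero_of_lt (by omega)]
    simp
  · have h1 := Nat.factorial_mul_descFactorial h
    unfold c3
    rw [Nat.cast_choose ℝ (by omega : l ≤ 3 * l),
      Nat.cast_choose ℝ (by omega : n + 1 - l ≤ 2 * l + 1), Nat.cast_choose ℝ hl,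
      show 3 * l - l = 2 * l by omega, show 2 * l + 1 - (n + 1 - l) = 3 * l - n by omega,
      ← h1, Nat.factorial_succ (2 * l)]
    push_cast
    have := Nat.factorial_ne_zero
    field_simp

/-- In positive degree every coefficient of `∑ c_l X^l (1 - X)^(2l+1)` vanishes, being an
`(n + 1)`-st finite difference of a polynomial of degree `n`. The terms `l > n + 1` do not
contribute in degree `n + 1`. -/
lemma sum_c3_coeff (n : ℕ) :
    ∑ l ∈ Finset.range (n + 2),
      c3 l * coeff (n + 1) ((X * (1 - X : ℝ⟦X⟧) ^ 2) ^ l * (1 - X)) = 0 := by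
  -- `P(l) = (3l)(3l - 1)⋯(3l - n + 1)`
  set P : Polynomial ℝ := (descPochhammer ℝ n).comp (Polynomial.C 3 * Polynomial.X) with hP
  have hdeg : P.natDegree < n + 1 := by
    rw [hP, Polynomial.natDegree_comp, descPochhammer_natDegree,
      Polynomial.natDegree_C_mul_X _ (by norm_num)]
    omega
  have h := congrFun (Polynomial.fwdDiff_iter_eq_zero_of_degree_lt hdeg) 0
  rw [fwdDiff_iter_eq_sum_shift] at h
  have hf : ((n + 1).factorial : ℝ) ≠ 0 := by positivity
  refine (mul_eq_zero.1 ?_).resolve_left hf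
  rw [Finset.mul_sum, ← Pi.zero_apply (M := fun _ : ℝ => ℝ) (0 : ℝ), ← h]
  refine Finset.sum_congr rfl fun l hl => ?_
  have hl' : l ≤ n + 1 := by simp at hl; omega
  rw [show (X * (1 - X : ℝ⟦X⟧) ^ 2) ^ l * (1 - X) = X ^ l * (1 - X) ^ (2 * l + 1) by
      rw [mul_pow, ← pow_mul, pow_succ (1 - X : ℝ⟦X⟧) (2 * l), mul_assoc],
    coeff_X_pow_mul', if_pos hl', coeff_one_sub_X_pow]
  have hev : Polynomial.eval ((0 : ℝ) + l • 1) P = ((3 * l).descFactorial n : ℝ) := by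
    rw [← descPochhammer_eval_eq_descFactorial ℝ]
    simp [hP]
  rw [hev]
  have := factorial_mul_c3 n l hl'
  simp only [zsmul_eq_mul]
  push_cast
  linear_combination (-1) ^ (n + 1 - l) * this

/-- The generating function `B = ∑ c_l X^l` of the numbers `c3`, which count ternary trees, as a
formal power series. -/
noncomputable def treeSeries : ℝ⟦X⟧ := PowerSeries.mk c3

lemma hasSubst_u : HasSubst (X * (1 - X : ℝ⟦X⟧) ^ 2) :=
  HasSubst.of_constantCoeff_zero' (by simp)

lemma coeff_treeSeries_subst (n N : ℕ) (h : n < N) :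
    coeff n (treeSeries.subst (X * (1 - X : ℝ⟦X⟧) ^ 2))
      = ∑ l ∈ Finset.range N, c3 l * coeff n ((X * (1 - X : ℝ⟦X⟧) ^ 2) ^ l) := by
  rw [coeff_subst' hasSubst_u, finsum_eq_sum_of_support_subset (s := Finset.range N)]
  · simp [treeSeries]
  · intro l hl
    by_contra hc
    simp only [Finset.coe_range, Set.mem_Iio, not_lt] at hc
    refine hl ?_
    simp only
    rw [mul_pow, coeff_X_pow_mul', if_neg (by omega), smul_zero]

lemma treeSeries_subst_mul :
    treeSeries.subst (X * (1 - X : ℝ⟦X⟧) ^ 2) * (1 - X) = 1 := by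
  ext n
  cases n with
  | zero =>
    have := coeff_treeSeries_subst 0 1 (by norm_num)
    simp [c3] at this
    simp [this]
  | succ n =>
    rw [mul_sub, mul_one, map_sub, coeff_succ_mul_X,
      coeff_treeSeries_subst (n + 1) (n + 2) (by omega),
      coeff_treeSeries_subst n (n + 2) (by omega), ← Finset.sum_sub_distrib, coeff_one,
      if_neg (by omega), ← sum_c3_coeff n]
    refine Finset.sum_congr rfl fun l _ => ?_
    rw [mul_sub, mul_one, map_sub, coeff_succ_mul_X, mul_sub]

/-- The functional equation `B = 1 + X B³`. It follows from `B(u) (1 - X) = 1` with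
`u = X (1 - X)²`, because `B - X B³` becomes `1` after substituting `u`, and `u` has a
compositional inverse. -/
theorem treeSeries_eq : treeSeries = 1 + X * treeSeries ^ 3 := by
  set u : ℝ⟦X⟧ := X * (1 - X) ^ 2 with hu
  have hs : HasSubst u := hasSubst_u
  have h0 : constantCoeff u = 0 := by simp [hu]
  have h1 : coeff 1 u = 1 := by simp [hu, coeff_succ_X_mul]
  have hunit : IsUnit (coeff 1 u) := by simp [h1]
  have hkey := treeSeries_subst_mul
  rw [← hu] at hkey
  have hsub : (treeSeries - X * treeSeries ^ 3).subst u = (1 : ℝ⟦X⟧) := by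
    rw [subst_sub hs, subst_mul hs, subst_pow hs, subst_X hs]
    set b := treeSeries.subst u
    rw [hu]
    linear_combination (1 - b * X * (b * (1 - X) + 1)) * hkey
  have hinv : HasSubst (u.substInvOfIsUnit hunit) := HasSubst.substInvOfIsUnit _ hunit
  have h := congrArg (subst (u.substInvOfIsUnit hunit)) hsub
  rw [subst_comp_subst_apply hs hinv, subst_substInvOfIsUnit_right u h0 hunit, X_subst,
    ← coe_substAlgHom hinv, map_one] at h
  exact sub_eq_iff_eq_add.1 h

lemma sum_coeff_mul_le {F G : ℝ⟦X⟧} (hF : ∀ n, 0 ≤ coeff n F) (hG : ∀ n, 0 ≤ coeff n G) (N : ℕ) :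
    ∑ n ∈ Finset.range N, coeff n (F * G)
      ≤ (∑ n ∈ Finset.range N, coeff n F) * ∑ n ∈ Finset.range N, coeff n G := by
  simp_rw [coeff_mul]
  rw [Finset.sum_mul_sum, ← Finset.sum_product',
    ← Finset.sum_biUnion (t := fun n => Finset.HasAntidiagonal.antidiagonal n) fun i _ j _ hij =>
      Finset.disjoint_left.2 fun x hx hy =>
        hij ((Finset.HasAntidiagonal.mem_antidiagonal.1 hx).symm.trans
          (Finset.HasAntidiagonal.mem_antidiagonal.1 hy))]
  refine Finset.sum_le_sum_of_subset_of_nonneg (fun x hx => ?_)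
    fun x _ _ => mul_nonneg (hF _) (hG _)
  simp only [Finset.mem_biUnion, Finset.mem_range, Finset.HasAntidiagonal.mem_antidiagonal,
    Finset.mem_product] at hx ⊢
  omega

lemma hasSum_coeff_mul {F G : ℝ⟦X⟧} {a b : ℝ}
    (ha : HasSum (fun n => coeff n F) a) (hb : HasSum (fun n => coeff n G) b) :
    HasSum (fun n => coeff n (F * G)) (a * b) := by
  have hF' : Summable fun n => ‖coeff n F‖ := ha.summable.norm
  have hG' : Summable fun n => ‖coeff n G‖ := hb.summable.norm
  simp_rw [coeff_mul]
  rw [← ha.tsum_eq, ← hb.tsum_eq, tsum_mul_tsum_eq_tsum_sum_antidiagonal_of_summable_norm hF' hG']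
  exact (summable_norm_sum_mul_antidiagonal_of_summable_norm hF' hG').of_norm.hasSum

/-- The functional equation for the coefficients `c_l x^l`. -/
lemma rescale_treeSeries (x : ℝ) :
    rescale x treeSeries = 1 + C x * X * rescale x treeSeries ^ 3 := by
  conv_lhs => rw [treeSeries_eq]
  simp

lemma coeff_rescale_treeSeries (x : ℝ) (n : ℕ) :
    coeff n (rescale x treeSeries) = c3 n * x ^ n := by
  simp [treeSeries, coeff_rescale, mul_comm]

lemma coeff_mul_nonneg {F G : ℝ⟦X⟧} (hF : ∀ n, 0 ≤ coeff n F) (hG : ∀ n, 0 ≤ coeff n G) (n : ℕ) :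
    0 ≤ coeff n (F * G) := by
  rw [coeff_mul]
  exact Finset.sum_nonneg fun _ _ => mul_nonneg (hF _) (hG _)

/-- The recursion for `c3` as a threefold convolution, weighted by powers of `x`. -/
lemma c3_succ_mul_pow (x : ℝ) (n : ℕ) :
    c3 (n + 1) * x ^ (n + 1)
      = x * coeff n (rescale x treeSeries * (rescale x treeSeries * rescale x treeSeries)) := by
  rw [← coeff_rescale_treeSeries, rescale_treeSeries]
  conv_lhs => rw [map_add, mul_assoc, coeff_C_mul, coeff_succ_X_mul, coeff_one,
    if_neg (Nat.succ_ne_zero n), zero_add]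
  rw [← rescale_treeSeries]
  ring_nf

lemma c3_zero : c3 0 = 1 := by simp [c3]

/-- Truncation of `B = 1 + x B³`: a threefold product of partial sums contains all terms of the
partial sum of the threefold convolution. -/
lemma partial_sum_succ_le {x : ℝ} (hx : 0 ≤ x) (N : ℕ) :
    ∑ l ∈ Finset.range (N + 1), c3 l * x ^ l
      ≤ 1 + x * (∑ l ∈ Finset.range N, c3 l * x ^ l) ^ 3 := by
  have hA : ∀ n, 0 ≤ coeff n (rescale x treeSeries) := fun n => by
    rw [coeff_rescale_treeSeries]; exact mul_nonneg (c3_nonneg n) (pow_nonneg hx n)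
  have h1 := sum_coeff_mul_le hA (coeff_mul_nonneg hA hA) N
  have h2 := sum_coeff_mul_le hA hA N
  have h0 : 0 ≤ ∑ n ∈ Finset.range N, coeff n (rescale x treeSeries) :=
    Finset.sum_nonneg fun n _ => hA n
  rw [Finset.sum_range_succ']
  simp_rw [c3_succ_mul_pow]
  rw [← Finset.mul_sum, c3_zero]
  simp_rw [← coeff_rescale_treeSeries]
  have h3 := h1.trans (mul_le_mul_of_nonneg_left h2 h0)
  have h4 := mul_le_mul_of_nonneg_left h3 hx
  linarith

/-- Every `s ≥ 0` with `1 - p + p s³ ≤ s` bounds all partial sums of `eta3 p`: if `S_N` is such a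
partial sum, then `S_(N+1) ≤ 1 - p + p S_N³`. -/
lemma sum_eta3_le {p s : ℝ} (hp0 : 0 ≤ p) (hp1 : p ≤ 1) (hs0 : 0 ≤ s)
    (hs : 1 - p + p * s ^ 3 ≤ s) (N : ℕ) :
    (1 - p) * ∑ l ∈ Finset.range N, c3 l * (p * (1 - p) ^ 2) ^ l ≤ s := by
  have hx : 0 ≤ p * (1 - p) ^ 2 := by positivity
  have hq : 0 ≤ 1 - p := by linarith
  induction N with
  | zero => simpa using hs0
  | succ N ih =>
    set S := ∑ l ∈ Finset.range N, c3 l * (p * (1 - p) ^ 2) ^ l with hS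
    have hS0 : 0 ≤ S := Finset.sum_nonneg fun n _ => mul_nonneg (c3_nonneg n) (pow_nonneg hx n)
    calc _ ≤ (1 - p) * (1 + p * (1 - p) ^ 2 * S ^ 3) :=
          mul_le_mul_of_nonneg_left (partial_sum_succ_le hx N) hq
      _ = 1 - p + p * ((1 - p) * S) ^ 3 := by ring
      _ ≤ 1 - p + p * s ^ 3 := by gcongr
      _ ≤ s := hs

lemma eta3_eq (p : ℝ) (l : ℕ) : eta3 p l = (1 - p) * (c3 l * (p * (1 - p) ^ 2) ^ l) := by
  rw [eta3, mul_pow, ← pow_mul]; ring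

lemma eta3_nonneg {p : ℝ} (hp0 : 0 ≤ p) (hp1 : p ≤ 1) (l : ℕ) : 0 ≤ eta3 p l := by
  have := c3_nonneg l
  have : 0 ≤ 1 - p := by linarith
  unfold eta3; positivity

/-- The partial sums are bounded by the fixed point `s = 1` of `s ↦ 2/3 + s³/3`, so the series
converges, and its sum is a nonnegative fixed point of that map; `1` is the only one. -/
lemma tsum_eta3_third : ∑' l, eta3 (1 / 3) l = 1 := by
  set x : ℝ := 1 / 3 * (1 - 1 / 3) ^ 2 with hx
  have hx0 : 0 ≤ x := by norm_num [hx]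
  have hb : ∀ N, ∑ l ∈ Finset.range N, c3 l * x ^ l ≤ 3 / 2 := fun N => by
    have := sum_eta3_le (p := 1 / 3) (s := 1) (by norm_num) (by norm_num) (by norm_num)
      (by norm_num) N
    rw [← hx] at this
    linarith
  have hnn : ∀ l, 0 ≤ c3 l * x ^ l := fun l => mul_nonneg (c3_nonneg l) (pow_nonneg hx0 l)
  have hsum : Summable fun l => c3 l * x ^ l := summable_of_sum_range_le hnn hb
  obtain ⟨b, hB⟩ := hsum
  have hb0 : 0 ≤ b := hB.nonneg hnn
  have hA : HasSum (fun n => coeff n (rescale x treeSeries)) b := by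
    simpa only [coeff_rescale_treeSeries] using hB
  have h3 := (hasSum_coeff_mul hA (hasSum_coeff_mul hA hA)).mul_left x
  simp_rw [← c3_succ_mul_pow] at h3
  have h4 := (hasSum_nat_add_iff' 1).2 hB
  have h5 := h3.unique h4
  simp only [Finset.range_one, Finset.sum_singleton, c3_zero, pow_zero, mul_one] at h5
  -- `b = 1 + (4/27) b³` has the double root `3/2` and the root `-3`.
  have h6 : (b - 3 / 2) ^ 2 * (b + 3) = 0 := by
    rw [hx] at h5
    linear_combination (27 / 4) * h5
  have h7 : b = 3 / 2 := by
    rcases mul_eq_zero.1 h6 with h | h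
    · linarith [pow_eq_zero_iff (two_ne_zero) |>.1 h]
    · linarith
  simp_rw [eta3_eq]
  rw [← hx, tsum_mul_left, hB.tsum_eq, h7]
  norm_num

/-- For `d = 3`, the function `p ↦ Σ_{l=0}^∞ √(3p)·η_l(p)` is maximized over
`[1/3, 1]` at `p = 1/3`, where its value is `1`. -/
theorem sqrt_mass_maximized_at_third :
    (∀ p ∈ Set.Icc (1 / 3 : ℝ) 1,
        (∑' l : ℕ, Real.sqrt (3 * p) * eta3 p l)
          ≤ ∑' l : ℕ, Real.sqrt (3 * (1 / 3)) * eta3 (1 / 3) l) ∧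
      (∑' l : ℕ, Real.sqrt (3 * (1 / 3 : ℝ)) * eta3 (1 / 3) l) = 1 := by
  have hone : (∑' l : ℕ, Real.sqrt (3 * (1 / 3 : ℝ)) * eta3 (1 / 3) l) = 1 := by
    rw [tsum_mul_left, tsum_eta3_third]
    norm_num
  refine ⟨fun p hp => ?_, hone⟩
  obtain ⟨hp, hp1⟩ := hp
  have hp0 : 0 ≤ p := by linarith
  rw [hone]
  -- `s = t⁻¹ = 1/√(3p)` is the bound required in `sum_eta3_le`, and `p = 1 / (3 s²)`.
  set t := Real.sqrt (3 * p) with ht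
  have ht2 : t ^ 2 = 3 * p := Real.sq_sqrt (by linarith)
  have ht1 : 1 ≤ t := Real.one_le_sqrt.2 (by linarith)
  have htp : 0 < t := by linarith
  have hs : 1 - p + p * t⁻¹ ^ 3 ≤ t⁻¹ := by
    have hpt : p = t ^ 2 / 3 := by linarith
    have hkey : t⁻¹ - (1 - p + p * t⁻¹ ^ 3) = (t - 1) ^ 2 * (t + 2) / (3 * t) := by
      rw [hpt]
      field_simp
      ring
    have : 0 ≤ (t - 1) ^ 2 * (t + 2) / (3 * t) := by positivity
    linarith
  refine Real.tsum_le_of_sum_range_le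
    (fun l => mul_nonneg htp.le (eta3_nonneg hp0 hp1 l)) fun N => ?_
  simp_rw [eta3_eq]
  rw [← Finset.mul_sum, ← Finset.mul_sum]
  calc _ ≤ t * t⁻¹ := mul_le_mul_of_nonneg_left
        (sum_eta3_le hp0 hp1 (inv_nonneg.2 htp.le) hs N) htp.le
    _ = 1 := mul_inv_cancel₀ htp.ne'
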